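/- arXiv:2103.07498 — 2 statements merged into one kernel-verified Lean document; each statement's English description precedes it below -/
import Mathlib

section
/- There exists a constant C > 0 such that for every integer n ≥ 1, the fourth central moment of the number of descents of a uniformly random involution of S_n is at most C·n²; equivalently, Σ_{π ∈ S_n, π² = id} (des(π) − (n−1)/2)⁴ ≤ C · n² · i_n. -/
open Finset

/-- The number of descents of a permutation of `Fin n`:
positions `i` with `i+1 < n` and `π(i) > π(i+1)`. -/
def descents {n : ℕ} (π : Equiv.Perm (Fin n)) : ℕ :=
  (Finset.univ.filter fun i : Fin n =>
    ∃ h : (i : ℕ) + 1 < n, π ⟨(i : ℕ) + 1, h⟩ < π i).card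

/-- The involutions of the symmetric group `S_n`. -/
def involutions (n : ℕ) : Finset (Equiv.Perm (Fin n)) :=
  Finset.univ.filter fun π => π * π = 1

/-!
Write `des π - (n - 1) / 2 = D π = ∑ i, X i π`, where `X i π = ± 1 / 2` according to whether `π` has
a descent at `i`. For each `i` there is a bijection `T i` of the set of involutions onto itself
that reverses the sign of `X i` but changes `D` by at most `4`: conjugate `π` by the transposition
`s = (i i+1)` if `π` and `s` do not commute, and replace `π` by `π * s` if they do. Averaging over
`π` and `T i π` gives
`∑ π, X i π * D π ^ (2k+1) = 1/2 * ∑ π, X i π * (D π ^ (2k+1) - D (T i π) ^ (2k+1))`,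
and the difference of the two powers is of order `D ^ (2k)`. Summing over `i` bounds the moment of
order `2k + 2` by `(2k + 1) * n` times the moment of order `2k`, so the even moments are at most
those of a centered Gaussian of variance `n`.
-/

section OddPowerDifference

lemma pow_mul_pow_add_pow_mul_pow_le {x y : ℝ} (hx : 0 ≤ x) (hy : 0 ≤ y) (i j : ℕ) :
    x ^ i * y ^ j + x ^ j * y ^ i ≤ x ^ (i + j) + y ^ (i + j) := by
  have same_sign : 0 ≤ (x ^ i - y ^ i) * (x ^ j - y ^ j) := by
    rcases le_total x y with hxy | hyx
    · exact mul_nonneg_of_nonpos_of_nonpos (sub_nonpos.2 (by gcongr)) (sub_nonpos.2 (by gcongr))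
    · exact mul_nonneg (sub_nonneg.2 (by gcongr)) (sub_nonneg.2 (by gcongr))
  rw [pow_add, pow_add]
  linarith

lemma two_mul_sum_pow_mul_pow_le {x y : ℝ} (hx : 0 ≤ x) (hy : 0 ≤ y) (p : ℕ) :
    2 * ∑ i ∈ range (p + 1), x ^ i * y ^ (p - i) ≤ (p + 1) * (x ^ p + y ^ p) := by
  have reflected : ∑ i ∈ range (p + 1), x ^ i * y ^ (p - i) =
      ∑ i ∈ range (p + 1), x ^ (p - i) * y ^ i := by
    simpa only [mul_comm, Nat.add_sub_cancel] using geom_sum₂_comm x y (p + 1)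
  calc 2 * ∑ i ∈ range (p + 1), x ^ i * y ^ (p - i)
      = ∑ i ∈ range (p + 1), (x ^ i * y ^ (p - i) + x ^ (p - i) * y ^ i) := by
        rw [sum_add_distrib, ← reflected, two_mul]
    _ ≤ ∑ _i ∈ range (p + 1), (x ^ p + y ^ p) := by
        refine sum_le_sum fun i hi => ?_
        have hip : i + (p - i) = p := Nat.add_sub_cancel' (mem_range_succ_iff.1 hi)
        simpa only [hip] using pow_mul_pow_add_pow_mul_pow_le hx hy i (p - i)
    _ = (p + 1) * (x ^ p + y ^ p) := by
        rw [sum_const, card_range, nsmul_eq_mul, Nat.cast_succ]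

lemma abs_pow_succ_sub_pow_succ_le (x y : ℝ) (p : ℕ) :
    |x ^ (p + 1) - y ^ (p + 1)| ≤ |x - y| * ((p + 1) / 2 * (|x| ^ p + |y| ^ p)) := by
  have geom_sum_le : |∑ i ∈ range (p + 1), x ^ i * y ^ (p - i)| ≤
      (p + 1) / 2 * (|x| ^ p + |y| ^ p) := by
    have triangle := abs_sum_le_sum_abs (fun i => x ^ i * y ^ (p - i)) (range (p + 1))
    simp only [abs_mul, abs_pow] at triangle
    linarith [two_mul_sum_pow_mul_pow_le (abs_nonneg x) (abs_nonneg y) p]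
  calc |x ^ (p + 1) - y ^ (p + 1)|
      = |x - y| * |∑ i ∈ range (p + 1), x ^ i * y ^ (p - i)| := by
        rw [← abs_mul, mul_comm, ← geom_sum₂_mul, Nat.add_sub_cancel]
    _ ≤ |x - y| * ((p + 1) / 2 * (|x| ^ p + |y| ^ p)) := by gcongr

end OddPowerDifference

section SignReversing

variable {Ω ι : Type*} {s : Finset Ω}

/-- `T` restricts to a sign-reversing involution of the finite set `s` for the statistic `X`. If
`ω` is uniform on `s`, then `(ω, T ω)` is an exchangeable pair. -/
structure IsSignReversing (s : Finset Ω) (T : Ω → Ω) (X : Ω → ℝ) : Prop where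
  map_mem : ∀ ω ∈ s, T ω ∈ s
  map_map : ∀ ω ∈ s, T (T ω) = ω
  map_neg : ∀ ω ∈ s, X (T ω) = -X ω

namespace IsSignReversing

variable {T : Ω → Ω} {X : Ω → ℝ}

lemma sum_comp (hT : IsSignReversing s T X) (f : Ω → ℝ) : ∑ ω ∈ s, f (T ω) = ∑ ω ∈ s, f ω :=
  sum_nbij' T T hT.map_mem hT.map_mem hT.map_map hT.map_map fun _ _ => rfl

lemma sum_mul_eq (hT : IsSignReversing s T X) (f : Ω → ℝ) :
    ∑ ω ∈ s, X ω * f ω = 1 / 2 * ∑ ω ∈ s, X ω * (f ω - f (T ω)) := by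
  have reversed : ∑ ω ∈ s, X ω * f (T ω) = -∑ ω ∈ s, X ω * f ω := by
    rw [← hT.sum_comp fun ω => X ω * f ω, ← sum_neg_distrib]
    exact sum_congr rfl fun ω hω => by rw [hT.map_neg ω hω, neg_mul, neg_neg]
  simp only [mul_sub, sum_sub_distrib, reversed]
  ring

lemma sum_mul_pow_le (hT : IsSignReversing s T X) {D : Ω → ℝ} {v : ℝ}
    (hv : ∀ ω ∈ s, |X ω * (D ω - D (T ω))| ≤ 2 * v) (k : ℕ) :
    ∑ ω ∈ s, X ω * D ω ^ (2 * k + 1) ≤ (2 * k + 1) * v * ∑ ω ∈ s, D ω ^ (2 * k) := by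
  have pointwise : ∀ ω ∈ s, X ω * (D ω ^ (2 * k + 1) - D (T ω) ^ (2 * k + 1)) ≤
      (2 * k + 1) * v * (D ω ^ (2 * k) + D (T ω) ^ (2 * k)) := fun ω hω => by
    have power_diff := abs_pow_succ_sub_pow_succ_le (D ω) (D (T ω)) (2 * k)
    simp only [(even_two_mul k).pow_abs] at power_diff
    push_cast at power_diff
    have moments_nonneg : 0 ≤ D ω ^ (2 * k) + D (T ω) ^ (2 * k) :=
      add_nonneg ((even_two_mul k).pow_nonneg _) ((even_two_mul k).pow_nonneg _)
    calc X ω * (D ω ^ (2 * k + 1) - D (T ω) ^ (2 * k + 1))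
        ≤ |X ω| * |D ω ^ (2 * k + 1) - D (T ω) ^ (2 * k + 1)| :=
          (le_abs_self _).trans_eq (abs_mul _ _)
      _ ≤ |X ω| * (|D ω - D (T ω)| *
            ((2 * k + 1) / 2 * (D ω ^ (2 * k) + D (T ω) ^ (2 * k)))) := by gcongr
      _ = |X ω * (D ω - D (T ω))| *
            ((2 * k + 1) / 2 * (D ω ^ (2 * k) + D (T ω) ^ (2 * k))) := by
          rw [abs_mul, mul_assoc]
      _ ≤ 2 * v * ((2 * k + 1) / 2 * (D ω ^ (2 * k) + D (T ω) ^ (2 * k))) := by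
          gcongr
          exact hv ω hω
      _ = (2 * k + 1) * v * (D ω ^ (2 * k) + D (T ω) ^ (2 * k)) := by ring
  calc ∑ ω ∈ s, X ω * D ω ^ (2 * k + 1)
      = 1 / 2 * ∑ ω ∈ s, X ω * (D ω ^ (2 * k + 1) - D (T ω) ^ (2 * k + 1)) :=
        hT.sum_mul_eq fun ω => D ω ^ (2 * k + 1)
    _ ≤ 1 / 2 * ∑ ω ∈ s, (2 * k + 1) * v * (D ω ^ (2 * k) + D (T ω) ^ (2 * k)) := by
        gcongr 1 / 2 * ?_
        exact sum_le_sum pointwise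
    _ = (2 * k + 1) * v * ∑ ω ∈ s, D ω ^ (2 * k) := by
        rw [← mul_sum, sum_add_distrib, hT.sum_comp fun ω => D ω ^ (2 * k)]
        ring

end IsSignReversing

variable [Fintype ι] {T : ι → Ω → Ω} {X : ι → Ω → ℝ} {v : ℝ}

lemma sum_pow_two_mul_add_two_le (hT : ∀ i, IsSignReversing s (T i) (X i))
    (hv : ∀ i, ∀ ω ∈ s, |X i ω * (∑ j, X j ω - ∑ j, X j (T i ω))| ≤ 2 * v) (k : ℕ) :
    ∑ ω ∈ s, (∑ i, X i ω) ^ (2 * k + 2) ≤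
      (2 * k + 1) * (Fintype.card ι * v) * ∑ ω ∈ s, (∑ i, X i ω) ^ (2 * k) := by
  calc ∑ ω ∈ s, (∑ i, X i ω) ^ (2 * k + 2)
      = ∑ i, ∑ ω ∈ s, X i ω * (∑ j, X j ω) ^ (2 * k + 1) := by
        rw [sum_comm]
        exact sum_congr rfl fun ω _ => by rw [← sum_mul, ← pow_succ']
    _ ≤ ∑ _i : ι, (2 * k + 1) * v * ∑ ω ∈ s, (∑ j, X j ω) ^ (2 * k) :=
        sum_le_sum fun i _ => (hT i).sum_mul_pow_le (hv i) k
    _ = (2 * k + 1) * (Fintype.card ι * v) * ∑ ω ∈ s, (∑ i, X i ω) ^ (2 * k) := by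
        rw [sum_const, card_univ, nsmul_eq_mul]
        ring

open scoped Nat in
theorem sum_pow_two_mul_le (hT : ∀ i, IsSignReversing s (T i) (X i)) (hv₀ : 0 ≤ v)
    (hv : ∀ i, ∀ ω ∈ s, |X i ω * (∑ j, X j ω - ∑ j, X j (T i ω))| ≤ 2 * v) (k : ℕ) :
    ∑ ω ∈ s, (∑ i, X i ω) ^ (2 * k) ≤ (2 * k - 1)‼ * (Fintype.card ι * v) ^ k * #s := by
  induction k with
  | zero => simp
  | succ k ih =>
    calc ∑ ω ∈ s, (∑ i, X i ω) ^ (2 * k + 2)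
        ≤ (2 * k + 1) * (Fintype.card ι * v) * ∑ ω ∈ s, (∑ i, X i ω) ^ (2 * k) :=
          sum_pow_two_mul_add_two_le hT hv k
      _ ≤ (2 * k + 1) * (Fintype.card ι * v) *
            ((2 * k - 1)‼ * (Fintype.card ι * v) ^ k * #s) := by gcongr
      _ = (2 * (k + 1) - 1)‼ * (Fintype.card ι * v) ^ (k + 1) * #s := by
          rw [show 2 * (k + 1) - 1 = 2 * k + 1 by lia, Nat.doubleFactorial_add_one]
          push_cast
          ring

end SignReversing

section Twist

variable {M : Type*} [Monoid M] [DecidableEq M] {s : M}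

/-- The twisted conjugate of `g` by an element `s` with `s * s = 1`: the conjugate `s * g * s`,
except that `g * s` is taken when `s` and `g` commute, where conjugation would fix `g`. -/
def twist (s g : M) : M :=
  if g * s = s * g then g * s else s * g * s

lemma twist_twist (hs : s * s = 1) (g : M) : twist s (twist s g) = g := by
  have cancel_left (x : M) : s * (s * x) = x := by rw [← mul_assoc, hs, one_mul]
  by_cases hg : g * s = s * g
  · have commutes : g * s * s = s * (g * s) := by rw [← mul_assoc, hg]
    rw [twist, twist, if_pos hg, if_pos commutes, mul_assoc, hs, mul_one]
  · have not_commutes : ¬ s * g * s * s = s * (s * g * s) := by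
      simpa only [mul_assoc, cancel_left, hs, mul_one] using Ne.symm hg
    rw [twist, twist, if_neg hg, if_neg not_commutes]
    simp only [mul_assoc, cancel_left, hs, mul_one]

lemma twist_mul_twist (hs : s * s = 1) {g : M} (hg : g * g = 1) : twist s g * twist s g = 1 := by
  unfold twist
  split_ifs with commutes
  · calc g * s * (g * s) = g * (s * g) * s := by simp only [mul_assoc]
      _ = g * g * (s * s) := by simp only [← commutes, mul_assoc]
      _ = 1 := by rw [hg, hs, mul_one]
  · calc s * g * s * (s * g * s) = s * g * (s * s) * g * s := by simp only [mul_assoc]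
      _ = s * (g * g) * s := by simp only [hs, mul_one, mul_assoc]
      _ = 1 := by rw [hg, mul_one, hs]

end Twist

section AdjacentSwap

lemma mul_swap_eq_swap_mul_of_sym2_eq {α : Type*} [DecidableEq α] {π : Equiv.Perm α} {a b : α}
    (h : s(π a, π b) = s(a, b)) :
    π * Equiv.swap a b = Equiv.swap a b * π := by
  rw [Equiv.mul_swap_eq_swap_mul]
  rcases Sym2.eq_iff.1 h with ⟨ha, hb⟩ | ⟨ha, hb⟩
  · rw [ha, hb]
  · rw [ha, hb, Equiv.swap_comm]

variable {α : Type*} [LinearOrder α] {a b x y : α}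

lemma swap_lt_swap_iff_of_covBy (hab : a ⋖ b) (hxy : s(x, y) ≠ s(a, b)) :
    Equiv.swap a b x < Equiv.swap a b y ↔ x < y := by
  have lt_right_iff {z : α} : z < b ↔ z ≤ a := ⟨hab.le_of_lt, fun hz => hz.trans_lt hab.lt⟩
  have left_lt_iff {z : α} : a < z ↔ b ≤ z := ⟨hab.ge_of_gt, hab.lt.trans_le⟩
  simp only [ne_eq, Sym2.eq_iff] at hxy
  grind

variable [DecidableEq (Equiv.Perm α)]

lemma twist_swap_lt_twist_swap_iff (hab : a ⋖ b) {π : Equiv.Perm α}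
    (h : s(π (Equiv.swap a b x), π (Equiv.swap a b y)) = s(a, b) →
      π * Equiv.swap a b = Equiv.swap a b * π) :
    twist (Equiv.swap a b) π x < twist (Equiv.swap a b) π y ↔
      π (Equiv.swap a b x) < π (Equiv.swap a b y) := by
  unfold twist
  split_ifs with commutes
  · rfl
  · exact swap_lt_swap_iff_of_covBy hab (mt h commutes)

lemma twist_swap_right_lt_left_iff (hab : a ⋖ b) (π : Equiv.Perm α) :
    twist (Equiv.swap a b) π b < twist (Equiv.swap a b) π a ↔ π a < π b := by
  rw [twist_swap_lt_twist_swap_iff hab, Equiv.swap_apply_left, Equiv.swap_apply_right]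
  simpa only [Equiv.swap_apply_left, Equiv.swap_apply_right] using mul_swap_eq_swap_mul_of_sym2_eq

lemma twist_swap_lt_iff_of_ne (hab : a ⋖ b) {π : Equiv.Perm α} (hxa : x ≠ a) (hxb : x ≠ b)
    (hya : y ≠ a) (hyb : y ≠ b) (h : s(π x, π y) ≠ s(a, b)) :
    twist (Equiv.swap a b) π x < twist (Equiv.swap a b) π y ↔ π x < π y := by
  have fix_x : Equiv.swap a b x = x := Equiv.swap_apply_of_ne_of_ne hxa hxb
  have fix_y : Equiv.swap a b y = y := Equiv.swap_apply_of_ne_of_ne hya hyb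
  rw [twist_swap_lt_twist_swap_iff hab, fix_x, fix_y]
  rw [fix_x, fix_y]
  exact fun h' => absurd h' h

end AdjacentSwap

section Descents

variable {m : ℕ}

lemma mem_involutions {n : ℕ} {π : Equiv.Perm (Fin n)} : π ∈ involutions n ↔ π * π = 1 := by
  simp [involutions]

lemma castSucc_covBy_succ (i : Fin m) : i.castSucc ⋖ i.succ :=
  ⟨Fin.castSucc_lt_succ, fun _ h h' => (Fin.castSucc_lt_iff_succ_le.1 h).not_gt h'⟩

/-- The indicator of a descent at position `i`, centered by subtracting `1 / 2`. -/
noncomputable def centeredDescent (i : Fin m) (π : Equiv.Perm (Fin (m + 1))) : ℝ :=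
  if π i.succ < π i.castSucc then 1 / 2 else -(1 / 2)

lemma descents_eq_card_filter (π : Equiv.Perm (Fin (m + 1))) :
    descents π = #{i : Fin m | π i.succ < π i.castSucc} := by
  have no_descent_at_last : ¬ ∃ h : (Fin.last m : ℕ) + 1 < m + 1,
      π ⟨Fin.last m + 1, h⟩ < π (Fin.last m) := by simp
  have descent_at_castSucc_iff (i : Fin m) :
      (∃ h : (i.castSucc : ℕ) + 1 < m + 1, π ⟨i.castSucc + 1, h⟩ < π i.castSucc) ↔
        π i.succ < π i.castSucc :=
    ⟨fun ⟨_, h⟩ => h, fun h => ⟨by simp, h⟩⟩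
  simp only [descents, card_filter, Fin.sum_univ_castSucc, descent_at_castSucc_iff,
    if_neg no_descent_at_last, add_zero]

lemma descents_sub_eq_sum_centeredDescent (π : Equiv.Perm (Fin (m + 1))) :
    (descents π : ℝ) - (((m + 1 : ℕ) : ℝ) - 1) / 2 = ∑ i : Fin m, centeredDescent i π := by
  have centeredDescent_eq (i : Fin m) : centeredDescent i π =
      (if π i.succ < π i.castSucc then 1 else 0) - 1 / 2 := by
    unfold centeredDescent
    split_ifs <;> norm_num
  simp only [centeredDescent_eq, sum_sub_distrib, descents_eq_card_filter, card_filter]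
  simp [div_eq_mul_inv]

lemma abs_centeredDescent (i : Fin m) (π : Equiv.Perm (Fin (m + 1))) :
    |centeredDescent i π| = 1 / 2 := by
  unfold centeredDescent
  split_ifs <;> norm_num [abs_of_pos]

/-- The involution of `S_{m+1}` that flips the descent at position `i`: twisted conjugation by the
adjacent transposition `(i i+1)`. -/
def flipDescent (i : Fin m) : Equiv.Perm (Fin (m + 1)) → Equiv.Perm (Fin (m + 1)) :=
  twist (Equiv.swap i.castSucc i.succ)

lemma centeredDescent_flipDescent_self (i : Fin m) (π : Equiv.Perm (Fin (m + 1))) :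
    centeredDescent i (flipDescent i π) = -centeredDescent i π := by
  have hne : π i.castSucc ≠ π i.succ := π.injective.ne Fin.castSucc_lt_succ.ne
  simp only [centeredDescent, flipDescent, twist_swap_right_lt_left_iff (castSucc_covBy_succ i)]
  rcases hne.lt_or_gt with h | h <;> simp [h, h.not_gt]

lemma isSignReversing_flipDescent (i : Fin m) :
    IsSignReversing (involutions (m + 1)) (flipDescent i) (centeredDescent i) where
  map_mem _ hπ := mem_involutions.2 <|
    twist_mul_twist (Equiv.swap_mul_self _ _) (mem_involutions.1 hπ)
  map_map π _ := twist_twist (Equiv.swap_mul_self _ _) π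
  map_neg π _ := centeredDescent_flipDescent_self i π

-- Away from `i` and its neighbours, only the `j` with `{π j, π (j+1)} = {i, i+1}` is affected, and
-- `π` being an involution identifies it as `min (π i) (π (i+1))`. For `i = 0`, `i - 1` truncates to
-- the already listed `0`.
lemma eq_of_centeredDescent_flipDescent_ne {i j : Fin m} {π : Equiv.Perm (Fin (m + 1))}
    (hπ : π ∈ involutions (m + 1))
    (hj : centeredDescent j (flipDescent i π) ≠ centeredDescent j π) :
    (j : ℕ) = i ∨ (j : ℕ) = i + 1 ∨ (j : ℕ) = i - 1 ∨
      (j : ℕ) = min (π i.castSucc) (π i.succ) := by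
  have apply_eq_iff {x y : Fin (m + 1)} : π x = y ↔ x = π y := by
    rw [← Equiv.Perm.eq_inv_iff_eq, inv_eq_of_mul_eq_one_left (mem_involutions.1 hπ)]
  contrapose! hj
  obtain ⟨hj₀, hj₁, hj₂, hj₃⟩ := hj
  have values_ne : s(π j.succ, π j.castSucc) ≠ s(i.castSucc, i.succ) := by
    simp only [ne_eq, Sym2.eq_iff, apply_eq_iff, Fin.ext_iff, Fin.val_castSucc, Fin.val_succ]
    grind
  have descent_iff : flipDescent i π j.succ < flipDescent i π j.castSucc ↔
      π j.succ < π j.castSucc := by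
    apply twist_swap_lt_iff_of_ne (castSucc_covBy_succ i) _ _ _ _ values_ne <;>
      simp only [ne_eq, Fin.ext_iff, Fin.val_castSucc, Fin.val_succ] <;> lia
  simp only [centeredDescent, descent_iff]

lemma card_centeredDescent_flipDescent_ne_le (i : Fin m) {π : Equiv.Perm (Fin (m + 1))}
    (hπ : π ∈ involutions (m + 1)) :
    #{j | centeredDescent j (flipDescent i π) ≠ centeredDescent j π} ≤ 4 := by
  refine (card_le_card_of_injOn (t := {(i : ℕ), (i : ℕ) + 1, (i : ℕ) - 1,
    ((min (π i.castSucc) (π i.succ) : Fin (m + 1)) : ℕ)}) Fin.val (fun j hj => ?_)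
    Fin.val_injective.injOn).trans card_le_four
  simpa using eq_of_centeredDescent_flipDescent_ne hπ (mem_filter.1 hj).2

lemma abs_sum_centeredDescent_sub_le (i : Fin m) {π : Equiv.Perm (Fin (m + 1))}
    (hπ : π ∈ involutions (m + 1)) :
    |∑ j, centeredDescent j π - ∑ j, centeredDescent j (flipDescent i π)| ≤ 4 := by
  have change_le (j : Fin m) : |centeredDescent j π - centeredDescent j (flipDescent i π)| ≤
      if centeredDescent j (flipDescent i π) ≠ centeredDescent j π then 1 else 0 := by
    split_ifs with h
    · refine (abs_sub _ _).trans ?_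
      norm_num [abs_centeredDescent]
    · simp [not_not.1 h]
  calc |∑ j, centeredDescent j π - ∑ j, centeredDescent j (flipDescent i π)|
      ≤ ∑ j, |centeredDescent j π - centeredDescent j (flipDescent i π)| := by
        rw [← sum_sub_distrib]
        exact abs_sum_le_sum_abs _ _
    _ ≤ #{j | centeredDescent j (flipDescent i π) ≠ centeredDescent j π} := by
        rw [card_filter]
        push_cast
        exact sum_le_sum fun j _ => change_le j
    _ ≤ 4 := mod_cast card_centeredDescent_flipDescent_ne_le i hπ

open scoped Nat in
theorem fourth_moment_descents_involutions_le_general (k : ℕ) {n : ℕ} (hn : 1 ≤ n) :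
    ∑ π ∈ involutions n, ((descents π : ℝ) - ((n : ℝ) - 1) / 2) ^ (2 * k) ≤
      (2 * k - 1)‼ * n ^ k * (involutions n).card := by
  obtain ⟨m, rfl⟩ := Nat.exists_eq_add_of_le' hn
  simp only [descents_sub_eq_sum_centeredDescent]
  have increment_le (i : Fin m) (π) (hπ : π ∈ involutions (m + 1)) :
      |centeredDescent i π *
        (∑ j, centeredDescent j π - ∑ j, centeredDescent j (flipDescent i π))| ≤ 2 * 1 := by
    rw [abs_mul, abs_centeredDescent]
    linarith [abs_sum_centeredDescent_sub_le i hπ]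
  calc ∑ π ∈ involutions (m + 1), (∑ i, centeredDescent i π) ^ (2 * k)
      ≤ (2 * k - 1)‼ * (Fintype.card (Fin m) * 1) ^ k * #(involutions (m + 1)) :=
        sum_pow_two_mul_le isSignReversing_flipDescent zero_le_one increment_le k
    _ ≤ (2 * k - 1)‼ * ((m + 1 : ℕ) : ℝ) ^ k * #(involutions (m + 1)) := by
        rw [Fintype.card_fin, mul_one]
        gcongr
        lia

end Descents

/-- The fourth central moment of the number of descents of a random involution of `S_n`
is `O(n²)`. -/
theorem fourth_moment_descents_involutions_le :
    ∃ C : ℝ, 0 < C ∧ ∀ n : ℕ, 1 ≤ n →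
      ∑ π ∈ involutions n, ((descents π : ℝ) - ((n : ℝ) - 1) / 2) ^ 4 ≤
        C * n ^ 2 * (involutions n).card :=
  ⟨3, by norm_num, fun _ hn => by
    simpa [Nat.doubleFactorial] using fourth_moment_descents_involutions_le_general 2 hn⟩
end

section
/- For every integer n ≥ 2, Σ_k k · D_{n,k} = (n−1)² · d_{n−2} + (n−1) · Σ_k k · D_{n−1,k}, where D_{m,k} is the number of derangements of {1,…,m} with exactly k descents and d_m is the total number of derangements of {1,…,m} (with d_0 = 1). -/
open Finset

/-- The derangements of the symmetric group `S_n`. -/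
def derangementSet (n : ℕ) : Finset (Equiv.Perm (Fin n)) :=
  Finset.univ.filter fun π => ∀ i, π i ≠ i

/-- `D_{n,k}`: the number of derangements of `{1,…,n}` with exactly `k` descents. -/
def derDesNat (n k : ℕ) : ℕ :=
  ((derangementSet n).filter fun π => descents π = k).card

/-!
Fix adjacent positions `i`, `j = i + 1`. Among the derangements that do not interchange `i` and `j`,
descents and ascents at `i` are equinumerous: composing with the transposition `(i j)` on the right
trades one for the other, and where that would create a fixed point (`π i = j` or `π j = i`),
conjugation by `(i j)` does so instead, because no value lies strictly between `i` and `j`.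
The derangements interchanging `i` and `j` all have a descent at `i`, and there are `d_{n-2}` of
them. Summing over the `n - 1` positions gives `2 ∑_π des π = (n - 1) (d_n + d_{n-2})`, and the
recurrence `d_n = (n - 1) (d_{n-1} + d_{n-2})` does the rest.
-/

open Equiv

section Interchange

variable {α : Type*} [DecidableEq α] {i j : α} {π : Perm α}

-- The left-hand side has the shape of the subtype in `derangements.subtypeEquiv`.
theorem fixedPoints_swap_mul_iff_derangement_interchanging (hij : i ≠ j) :
    (∀ a, ¬(a ≠ i ∧ a ≠ j) ↔ a ∈ Function.fixedPoints (swap i j * π)) ↔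
      π ∈ derangements α ∧ π i = j ∧ π j = i := by
  simp only [Function.mem_fixedPoints, Function.IsFixedPt, Perm.mul_apply, swap_apply_eq_iff,
    derangements, Set.mem_ofPred_eq]
  constructor
  · intro hfix
    have hi : π i = j := by simpa using (hfix i).1 (by simp)
    have hj : π j = i := by simpa using (hfix j).1 (by simp)
    refine ⟨fun a ha => ?_, hi, hj⟩
    have := hfix a
    grind
  · rintro ⟨hπ, hi, hj⟩ a
    have hai : π a = i ↔ a = j := by rw [← hj, π.injective.eq_iff]
    have haj : π a = j ↔ a = i := by rw [← hi, π.injective.eq_iff]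
    have := hπ a
    grind

theorem card_derangements_interchanging [Fintype α] (hij : i ≠ j) :
    #{π ∈ (derangements α).toFinset | π i = j ∧ π j = i} =
      numDerangements (Fintype.card α - 2) := by
  have card_rest : Fintype.card {a : α // a ≠ i ∧ a ≠ j} = Fintype.card α - 2 := by
    have : ({a | a ≠ i ∧ a ≠ j} : Finset α) = {i, j}ᶜ := by ext; simp
    rw [Fintype.card_subtype, this, card_compl, card_pair hij]
  have rest_equiv : {π : Perm α // π ∈ derangements α ∧ π i = j ∧ π j = i} ≃
      derangements {a : α // a ≠ i ∧ a ≠ j} :=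
    ((Equiv.mulLeft (swap i j)).subtypeEquiv fun _ =>
      (fixedPoints_swap_mul_iff_derangement_interchanging hij).symm).trans
        (derangements.subtypeEquiv _).symm
  rw [← card_rest, ← card_derangements_eq_numDerangements, ← Fintype.card_congr rest_equiv,
    Fintype.card_subtype]
  congr 1
  ext
  simp

end Interchange

/-- The involution on derangements that exchanges ascents and descents at adjacent positions `i`,
`j`, leaving fixed the derangements that interchange `i` and `j`. It swaps the values at `i` and
`j`, except that it conjugates by `swap i j` when swapping the values would create a fixed point. -/
def derangementFlip {α : Type*} [DecidableEq α] (i j : α) (π : Perm α) : Perm α :=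
  if π i = j ∨ π j = i then swap i j * π * swap i j else π * swap i j

section Flip

variable {α : Type*} [DecidableEq α] {i j : α} {π : Perm α}

theorem derangementFlip_mem_derangements (hπ : π ∈ derangements α) :
    derangementFlip i j π ∈ derangements α := by
  intro a
  unfold derangementFlip
  split_ifs with h
  · rw [Perm.mul_apply, Perm.mul_apply, Ne, swap_apply_eq_iff]
    exact hπ (swap i j a)
  · have := hπ a
    rw [Perm.mul_apply, swap_apply_def]
    grind

theorem derangementFlip_derangementFlip (hπ : π ∈ derangements α) :
    derangementFlip i j (derangementFlip i j π) = π := by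
  by_cases h : π i = j ∨ π j = i
  · have hconj : (swap i j * π * swap i j) i = j ∨ (swap i j * π * swap i j) j = i := by
      simpa [swap_apply_eq_iff] using h.symm
    rw [derangementFlip, derangementFlip, if_pos h, if_pos hconj]
    simp [mul_assoc]
  · have hswap : ¬((π * swap i j) i = j ∨ (π * swap i j) j = i) := by
      simpa using ⟨hπ j, hπ i⟩
    rw [derangementFlip, derangementFlip, if_neg h, if_neg hswap]
    simp [mul_assoc]

theorem derangementFlip_interchanges_iff (hπ : π ∈ derangements α) :
    derangementFlip i j π i = j ∧ derangementFlip i j π j = i ↔ π i = j ∧ π j = i := by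
  have hi := hπ i
  unfold derangementFlip
  split_ifs with h
  · simp [swap_apply_eq_iff, and_comm]
  · simp only [Perm.mul_apply, swap_apply_left, swap_apply_right]
    tauto

end Flip

section AdjacentPositions

variable {α : Type*} [LinearOrder α] {i j : α} {π : Perm α}

theorem derangementFlip_lt_iff (hij : i ⋖ j) (hπ : π ∈ derangements α)
    (hnot : ¬(π i = j ∧ π j = i)) :
    derangementFlip i j π j < derangementFlip i j π i ↔ π i < π j := by
  have hi := hπ i
  have hj := hπ j
  unfold derangementFlip
  split_ifs with h
  · simp only [Perm.mul_apply, swap_apply_left, swap_apply_right]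
    rcases h with h | h
    · have hne : π j ≠ i := fun h' => hnot ⟨h, h'⟩
      rw [h, swap_apply_right, swap_apply_of_ne_of_ne hne hj, hij.lt_iff_le_right,
        hj.symm.le_iff_lt]
    · have hne : π i ≠ j := fun h' => hnot ⟨h', h⟩
      rw [h, swap_apply_left, swap_apply_of_ne_of_ne hi hne, hij.lt_iff_le_left,
        hi.le_iff_lt]
  · simp

variable [Fintype α]

theorem card_derangements_descent_not_interchanging (hij : i ⋖ j) :
    #{π ∈ (derangements α).toFinset | π j < π i ∧ ¬(π i = j ∧ π j = i)} =
      #{π ∈ (derangements α).toFinset | π i < π j} := by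
  refine card_nbij' (derangementFlip i j) (derangementFlip i j) ?_ ?_ ?_ ?_ <;>
    simp only [Set.MapsTo, Set.LeftInvOn, Set.RightInvOn, coe_filter, Set.mem_toFinset,
      Set.mem_ofPred_eq]
  · rintro π ⟨hπ, hdes, hnot⟩
    have hasc := (derangementFlip_lt_iff hij hπ hnot).not.2 hdes.not_gt
    exact ⟨derangementFlip_mem_derangements hπ,
      (not_lt.1 hasc).lt_of_ne ((derangementFlip i j π).injective.ne hij.ne)⟩
  · rintro π ⟨hπ, hasc⟩
    have hnot : ¬(π i = j ∧ π j = i) := fun h => hasc.not_gt (by simpa [h] using hij.lt)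
    exact ⟨derangementFlip_mem_derangements hπ, (derangementFlip_lt_iff hij hπ hnot).2 hasc,
      (derangementFlip_interchanges_iff hπ).not.2 hnot⟩
  · exact fun π hπ => derangementFlip_derangementFlip hπ.1
  · exact fun π hπ => derangementFlip_derangementFlip hπ.1

theorem card_derangements_descent_eq_interchanging_add_ascent (hij : i ⋖ j) :
    #{π ∈ (derangements α).toFinset | π j < π i} =
      #{π ∈ (derangements α).toFinset | π i = j ∧ π j = i} +
        #{π ∈ (derangements α).toFinset | π i < π j} := by
  have interchanging_descent (π : Perm α) : π j < π i ∧ (π i = j ∧ π j = i) ↔ π i = j ∧ π j = i :=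
    and_iff_right_of_imp fun h => by simpa [h] using hij.lt
  rw [← card_derangements_descent_not_interchanging hij,
    ← card_filter_add_card_filter_not (s := {π ∈ (derangements α).toFinset | π j < π i})
      (fun π => π i = j ∧ π j = i)]
  simp only [filter_filter, interchanging_descent]

theorem two_mul_card_derangements_descent (hij : i ⋖ j) :
    2 * #{π ∈ (derangements α).toFinset | π j < π i} =
      numDerangements (Fintype.card α) + numDerangements (Fintype.card α - 2) := by
  have total : #{π ∈ (derangements α).toFinset | π j < π i} +
      #{π ∈ (derangements α).toFinset | π i < π j} = numDerangements (Fintype.card α) := by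
    rw [← card_derangements_eq_numDerangements, ← Set.toFinset_card,
      ← card_filter_add_card_filter_not (s := (derangements α).toFinset) (fun π => π j < π i)]
    congr! 4 with π
    simp [le_iff_lt_or_eq, hij.ne]
  have descents_eq := card_derangements_descent_eq_interchanging_add_ascent hij
  rw [card_derangements_interchanging hij.ne] at descents_eq
  lia

end AdjacentPositions

theorem derangementSet_eq_toFinset (n : ℕ) :
    derangementSet n = (derangements (Fin n)).toFinset := by
  ext π
  rw [Set.mem_toFinset]
  exact mem_filter_univ π

theorem card_derangementSet (n : ℕ) : #(derangementSet n) = numDerangements n := by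
  rw [derangementSet_eq_toFinset, Set.toFinset_card, card_derangements_fin_eq_numDerangements]

theorem descents_eq_card_succ_lt_castSucc {m : ℕ} (π : Perm (Fin (m + 1))) :
    descents π = #{i : Fin m | π i.succ < π i.castSucc} := by
  rw [descents, card_filter, Fin.sum_univ_castSucc, card_filter]
  simp [Fin.succ]

theorem descents_le {m : ℕ} (π : Perm (Fin (m + 1))) : descents π ≤ m := by
  rw [descents_eq_card_succ_lt_castSucc]
  exact (card_le_univ _).trans_eq (Fintype.card_fin m)

theorem sum_range_mul_derDesNat {m N : ℕ} (hN : m < N) :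
    ∑ k ∈ range N, k * derDesNat (m + 1) k = ∑ π ∈ derangementSet (m + 1), descents π := by
  have maps_to : ∀ π ∈ derangementSet (m + 1), descents π ∈ range N := fun π _ =>
    mem_range.2 ((descents_le π).trans_lt hN)
  rw [← sum_fiberwise_of_maps_to' maps_to fun k => k]
  simp [derDesNat, mul_comm]

theorem two_mul_sum_descents (m : ℕ) :
    2 * ∑ π ∈ derangementSet (m + 2), descents π =
      (m + 1) * (numDerangements (m + 2) + numDerangements m) := by
  calc 2 * ∑ π ∈ derangementSet (m + 2), descents π
      = ∑ i : Fin (m + 1), 2 * #{π ∈ derangementSet (m + 2) | π i.succ < π i.castSucc} := by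
        simp only [descents_eq_card_succ_lt_castSucc, ← mul_sum]
        congr 1
        exact sum_card_bipartiteAbove_eq_sum_card_bipartiteBelow
          fun (π : Perm (Fin (m + 2))) (i : Fin (m + 1)) => π i.succ < π i.castSucc
    _ = ∑ _i : Fin (m + 1), (numDerangements (m + 2) + numDerangements m) := by
        refine sum_congr rfl fun i _ => ?_
        simpa [derangementSet_eq_toFinset] using
          two_mul_card_derangements_descent (i := i.castSucc) (j := i.succ) (by simp)
    _ = (m + 1) * (numDerangements (m + 2) + numDerangements m) := by simp

theorem two_mul_sum_descents_add_mul_numDerangements (m : ℕ) :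
    2 * ∑ π ∈ derangementSet (m + 1), descents π + m * numDerangements m =
      (m + 1) * numDerangements (m + 1) := by
  cases m with
  | zero =>
    have descents_eq_zero (π : Perm (Fin 1)) : descents π = 0 := Nat.le_zero.1 (descents_le π)
    simp [descents_eq_zero]
  | succ m =>
    rw [two_mul_sum_descents, numDerangements_add_two]
    ring

/-- `Σ_k k·D_{n,k} = (n-1)²·d_{n-2} + (n-1)·Σ_k k·D_{n-1,k}`. -/
theorem sum_descents_derangements_recurrence (n : ℕ) (hn : 2 ≤ n) :
    ∑ k ∈ Finset.range n, k * derDesNat n k =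
      (n - 1) ^ 2 * (derangementSet (n - 2)).card +
        (n - 1) * ∑ k ∈ Finset.range n, k * derDesNat (n - 1) k := by
  obtain ⟨m, rfl⟩ := Nat.exists_eq_add_of_le' hn
  change ∑ k ∈ range (m + 2), k * derDesNat (m + 2) k =
    (m + 1) ^ 2 * #(derangementSet m) + (m + 1) * ∑ k ∈ range (m + 2), k * derDesNat (m + 1) k
  rw [sum_range_mul_derDesNat (m + 1).lt_succ_self, sum_range_mul_derDesNat (by lia),
    card_derangementSet]
  have sum_eq := two_mul_sum_descents_add_mul_numDerangements (m + 1)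
  have sum_pred_eq := two_mul_sum_descents_add_mul_numDerangements m
  rw [numDerangements_add_two] at sum_eq
  qify at *
  linear_combination (sum_eq - (m + 1) * sum_pred_eq) / 2
end
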